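/- Let d and r be positive integers, and let X_r = {(x,y) ∈ (ℂ[t]_{<r})^2 : y = x^d}, viewed as a subset of ℂ^{2r} via coefficients. Then the Zariski closure of X_r in ℂ^{2r} has dimension exactly ⌈r/d⌉; that is: (i) there exists an ideal J₀ of ℂ[Y_1,…,Y_{2r}] such that every point of X_r is a common zero of J₀ and the Krull dimension of ℂ[Y_1,…,Y_{2r}]/J₀ is at most ⌈r/d⌉; and (ii) every ideal J of ℂ[Y_1,…,Y_{2r}] all of whose elements vanish at every point of X_r satisfies that the Krull dimension of ℂ[Y_1,…,Y_{2r}]/J is at least ⌈r/d⌉. -/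

import Mathlib

/-!
Write `n = ⌈r/d⌉`. If `x` and `y = x ^ d` both have degree `< r`, then `d * deg x < r`, so
`deg x < n`; conversely every `x` of degree `< n` gives a point `(x, x ^ d)` of the curve. Hence
the points of the curve are exactly the image of the polynomial map `ℂ^n → ℂ^{2r}` sending the
coefficients of `x` to those of `(x, x ^ d)` (`onCurve_iff`).

The comorphism `curveHom : ℂ[Y_1,…,Y_{2r}] → ℂ[Z_1,…,Z_n]` is surjective, since the coefficients
of `x` are among the coordinates. As a polynomial vanishing on all of `ℂ^n` is zero, an ideal
vanishes on the curve if and only if it is contained in `ker curveHom`. So `ker curveHom`, whose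
quotient is `ℂ[Z_1,…,Z_n]` of Krull dimension `n`, proves both bounds.
-/

set_option maxSynthPendingDepth 3

/-- The Laurent series `∑_{i<r} a_i t^i` associated to a tuple of coefficients
`a ∈ ℂ^r`, i.e. the element of `ℂ((t))` corresponding to a polynomial of
degree `< r`. -/
noncomputable def seriesOfCoeffs (r : ℕ) (a : Fin r → ℂ) : LaurentSeries ℂ :=
  ∑ i : Fin r, HahnSeries.single (i : ℤ) (a i)

/-- A point of `ℂ^{2r}`, viewed as a pair of polynomials `(x, y)` of degree
`< r` (first index: `0` for `x`, `1` for `y`), lies on the plane curve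
`y = x^d` over `ℂ((t))`. -/
def onCurve (d r : ℕ) (p : Fin 2 × Fin r → ℂ) : Prop :=
  seriesOfCoeffs r (fun j => p (1, j)) = (seriesOfCoeffs r fun j => p (0, j)) ^ d

open Polynomial in
/-- The polynomial `∑_{i<n} a_i X^i` with coefficient tuple `a`, over any commutative ring: it is
used both over `ℂ` and over `ℂ[Z_1,…,Z_n]` with the generic coefficients `Z_i`. -/
noncomputable def polyOfCoeffs {R : Type*} [CommRing R] (n : ℕ) (a : Fin n → R) : R[X] :=
  ∑ i : Fin n, monomial (i : ℕ) (a i)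

lemma coeff_polyOfCoeffs {R : Type*} [CommRing R] (n : ℕ) (a : Fin n → R) (k : ℕ) :
    (polyOfCoeffs n a).coeff k = if h : k < n then a ⟨k, h⟩ else 0 := by
  simp only [polyOfCoeffs, Polynomial.finsetSum_coeff, Polynomial.coeff_monomial]
  split_ifs with h
  · rw [Finset.sum_eq_single (⟨k, h⟩ : Fin n)]
    · simp
    · intro b _ hb
      rw [if_neg]
      rintro rfl
      exact hb rfl
    · simp
  · refine Finset.sum_eq_zero fun i _ => if_neg ?_
    have := i.2
    omega

lemma map_polyOfCoeffs {R S : Type*} [CommRing R] [CommRing S] (f : R →+* S) (n : ℕ)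
    (a : Fin n → R) :
    (polyOfCoeffs n a).map f = polyOfCoeffs n fun i => f (a i) := by
  simp [polyOfCoeffs, Polynomial.map_sum]

lemma degree_polyOfCoeffs_lt {R : Type*} [CommRing R] (n : ℕ) (a : Fin n → R) :
    (polyOfCoeffs n a).degree < n := by
  rw [Polynomial.degree_lt_iff_coeff_zero]
  intro k hk
  rw [coeff_polyOfCoeffs, dif_neg (by omega)]

lemma seriesOfCoeffs_eq (r : ℕ) (a : Fin r → ℂ) :
    seriesOfCoeffs r a =
      ((HahnSeries.ofPowerSeries ℤ ℂ).comp Polynomial.coeToPowerSeries.ringHom)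
        (polyOfCoeffs r a) := by
  rw [polyOfCoeffs, map_sum, seriesOfCoeffs]
  refine Finset.sum_congr rfl fun i _ => ?_
  rw [← Polynomial.C_mul_X_pow_eq_monomial]
  simp [HahnSeries.ofPowerSeries_X_pow]

lemma onCurve_iff_poly (d r : ℕ) (p : Fin 2 × Fin r → ℂ) :
    onCurve d r p ↔
      polyOfCoeffs r (fun j => p (1, j)) = polyOfCoeffs r (fun j => p (0, j)) ^ d := by
  rw [onCurve, seriesOfCoeffs_eq, seriesOfCoeffs_eq, ← map_pow]
  refine Function.Injective.eq_iff ?_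
  rw [RingHom.coe_comp]
  exact HahnSeries.ofPowerSeries_injective.comp (Polynomial.coe_injective ℂ)

/-- The coefficients below `t^r` of the pair `(x, x ^ d)`, where `x = ∑_{i<n} z_i t^i`. -/
noncomputable def curvePoint {R : Type*} [CommRing R] (d n r : ℕ) (z : Fin n → R) :
    Fin 2 × Fin r → R :=
  fun q => (polyOfCoeffs n z ^ (if q.1 = 0 then 1 else d)).coeff q.2

lemma map_curvePoint {R S : Type*} [CommRing R] [CommRing S] (f : R →+* S) (d n r : ℕ)
    (z : Fin n → R) (q : Fin 2 × Fin r) :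
    f (curvePoint d n r z q) = curvePoint d n r (fun i => f (z i)) q := by
  rw [curvePoint, curvePoint, ← map_polyOfCoeffs, ← Polynomial.map_pow, Polynomial.coeff_map]

lemma polyOfCoeffs_coeff {R : Type*} [CommRing R] (r : ℕ) (P : Polynomial R)
    (hP : P.degree < r) : polyOfCoeffs r (fun j => P.coeff j) = P := by
  ext k
  rw [coeff_polyOfCoeffs]
  split_ifs with h
  · rfl
  · exact ((Polynomial.degree_lt_iff_coeff_zero _ _).1 hP k (by omega)).symm

lemma degree_lt_iff_natDegree_lt {R : Type*} [CommRing R] (r : ℕ) (hr : 0 < r)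
    (P : Polynomial R) : P.degree < r ↔ P.natDegree < r := by
  by_cases h : P = 0
  · simp [h, hr]
  · exact (Polynomial.natDegree_lt_iff_degree_lt h).symm

/-- A polynomial and its `d`-th power both have degree `< r` exactly when the former has degree
`< ⌈r/d⌉`. -/
lemma natDegree_lt_ceil_iff (d r : ℕ) (hd : 0 < d) (hr : 0 < r) (P : Polynomial ℂ) :
    P.natDegree < (r + d - 1) / d ↔ (P ^ d).natDegree < r := by
  rw [Polynomial.natDegree_pow, ← Nat.succ_le_iff, Nat.le_div_iff_mul_le hd, Nat.succ_mul,
    mul_comm d]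
  omega

/-- The points of the curve are exactly those parametrized by `curvePoint` with `n = ⌈r/d⌉`. -/
lemma onCurve_iff (d r : ℕ) (hd : 0 < d) (hr : 0 < r) (p : Fin 2 × Fin r → ℂ) :
    onCurve d r p ↔ ∃ z, p = curvePoint d ((r + d - 1) / d) r z := by
  have hn : 0 < (r + d - 1) / d := Nat.div_pos (by omega) hd
  rw [onCurve_iff_poly]
  constructor
  · intro h
    set P := polyOfCoeffs r (fun j => p (0, j)) with hP
    have hdeg : P.natDegree < (r + d - 1) / d := by
      rw [natDegree_lt_ceil_iff d r hd hr, ← h, ← degree_lt_iff_natDegree_lt r hr]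
      exact degree_polyOfCoeffs_lt _ _
    refine ⟨fun i => P.coeff i, ?_⟩
    ext ⟨i, j⟩
    rw [curvePoint, polyOfCoeffs_coeff _ _ ((degree_lt_iff_natDegree_lt _ hn P).2 hdeg)]
    fin_cases i
    · simp [hP, coeff_polyOfCoeffs]
    · simp [← h, coeff_polyOfCoeffs]
  · rintro ⟨z, rfl⟩
    have hdeg := (degree_lt_iff_natDegree_lt _ hn _).1 (degree_polyOfCoeffs_lt _ z)
    have hpow := (natDegree_lt_ceil_iff d r hd hr _).1 hdeg
    have hx : (polyOfCoeffs _ z).natDegree < r := by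
      rw [Polynomial.natDegree_pow] at hpow
      exact (Nat.le_mul_of_pos_left _ hd).trans_lt hpow
    simp only [curvePoint, if_true, one_ne_zero, if_false, pow_one]
    rw [polyOfCoeffs_coeff _ _ ((degree_lt_iff_natDegree_lt r hr _).2 hpow),
      polyOfCoeffs_coeff _ _ ((degree_lt_iff_natDegree_lt r hr _).2 hx)]

/-- The comorphism of the parametrization `z ↦ curvePoint d n r z`. -/
noncomputable def curveHom (d n r : ℕ) :
    MvPolynomial (Fin 2 × Fin r) ℂ →ₐ[ℂ] MvPolynomial (Fin n) ℂ :=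
  MvPolynomial.aeval (curvePoint d n r MvPolynomial.X)

lemma eval_curveHom (d n r : ℕ) (z : Fin n → ℂ) (g : MvPolynomial (Fin 2 × Fin r) ℂ) :
    MvPolynomial.eval z (curveHom d n r g) = MvPolynomial.eval (curvePoint d n r z) g := by
  have : (MvPolynomial.eval z).comp (curveHom d n r).toRingHom =
      MvPolynomial.eval (curvePoint d n r z) := by
    refine MvPolynomial.ringHom_ext (fun c => ?_) fun q => ?_
    · simp [curveHom]
    · simp [curveHom, map_curvePoint]
  exact congrArg (fun f : _ →+* ℂ => f g) this

lemma curveHom_surjective (d n r : ℕ) (hnr : n ≤ r) :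
    Function.Surjective (curveHom d n r) := by
  rw [← AlgHom.range_eq_top, eq_top_iff, ← MvPolynomial.adjoin_range_X, Algebra.adjoin_le_iff]
  rintro _ ⟨i, rfl⟩
  refine ⟨MvPolynomial.X (0, Fin.castLE hnr i), ?_⟩
  simp [curveHom, curvePoint, coeff_polyOfCoeffs]

/-- The remark after Theorem `motivicBP` of the paper: for the plane curve
`X : y = x^d` over `ℂ((t))` one has `n_r(X) = ⌈r/d⌉` for every `r > 0`
(where `⌈r/d⌉ = (r + d - 1)/d`): (i) some ideal `J₀` of `ℂ[Y_1,…,Y_{2r}]`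
vanishes on `X_r` and has quotient of Krull dimension at most `⌈r/d⌉`, and
(ii) every ideal `J` vanishing on `X_r` has quotient of Krull dimension at
least `⌈r/d⌉`. -/
theorem curve_y_eq_x_pow_d_dimension (d r : ℕ) (hd : 0 < d) (hr : 0 < r) :
    (∃ J₀ : Ideal (MvPolynomial (Fin 2 × Fin r) ℂ),
      (∀ p : Fin 2 × Fin r → ℂ, onCurve d r p →
        ∀ g ∈ J₀, MvPolynomial.eval p g = 0) ∧
      ringKrullDim (MvPolynomial (Fin 2 × Fin r) ℂ ⧸ J₀)
        ≤ ((((r + d - 1) / d : ℕ) : ℕ∞) : WithBot ℕ∞)) ∧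
    (∀ J : Ideal (MvPolynomial (Fin 2 × Fin r) ℂ),
      (∀ p : Fin 2 × Fin r → ℂ, onCurve d r p →
        ∀ g ∈ J, MvPolynomial.eval p g = 0) →
      ((((r + d - 1) / d : ℕ) : ℕ∞) : WithBot ℕ∞)
        ≤ ringKrullDim (MvPolynomial (Fin 2 × Fin r) ℂ ⧸ J)) := by
  have hdim : ringKrullDim (MvPolynomial (Fin ((r + d - 1) / d)) ℂ) =
      ((((r + d - 1) / d : ℕ) : ℕ∞) : WithBot ℕ∞) := by
    rw [MvPolynomial.ringKrullDim_of_isNoetherianRing, ringKrullDim_eq_zero_of_field, zero_add,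
      Nat.card_eq_fintype_card, Fintype.card_fin]
    rfl
  have hnr : (r + d - 1) / d ≤ r := by
    refine Nat.div_le_of_le_mul ?_
    obtain ⟨d, rfl⟩ := Nat.exists_eq_succ_of_ne_zero hd.ne'
    obtain ⟨r, rfl⟩ := Nat.exists_eq_succ_of_ne_zero hr.ne'
    simp only [Nat.succ_eq_add_one]
    nlinarith [Nat.zero_le (d * r), Nat.sub_le (r + 1 + (d + 1)) 1,
      Nat.sub_add_cancel (show 1 ≤ r + 1 + (d + 1) by omega)]
  have hsurj := curveHom_surjective d _ r hnr
  refine ⟨⟨RingHom.ker (curveHom d ((r + d - 1) / d) r), ?_, ?_⟩, ?_⟩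
  · intro p hp g hg
    obtain ⟨z, rfl⟩ := (onCurve_iff d r hd hr p).1 hp
    rw [← eval_curveHom, RingHom.mem_ker.1 hg, map_zero]
  · rw [← hdim]
    exact (ringKrullDim_eq_of_ringEquiv
      (Ideal.quotientKerAlgEquivOfSurjective hsurj).toRingEquiv).le
  · intro J hJ
    have hker : ∀ g ∈ J, (curveHom d ((r + d - 1) / d) r : _ →+* MvPolynomial (Fin ((r + d - 1) / d)) ℂ) g = 0 := by
      intro g hg
      refine MvPolynomial.funext fun z => ?_
      rw [map_zero]
      exact (eval_curveHom d _ r z g).trans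
        (hJ _ ((onCurve_iff d r hd hr _).2 ⟨z, rfl⟩) g hg)
    rw [← hdim]
    exact ringKrullDim_le_of_surjective (Ideal.Quotient.lift J _ hker)
      (Ideal.Quotient.lift_surjective_of_surjective J hker hsurj)
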